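/- arXiv:2603.22001 — 4 statements merged into one kernel-verified Lean document; each statement's English description precedes it below -/
import Mathlib

section
/- Let p be a prime and F_p the field with p elements. Let d_0 ≥ 1 and let m_i (for i in a finite index set B) be nonzero polynomials in F_p[x] with d_i = natDegree(m_i), such that the polynomials x^{d_0} and the m_i (i ∈ B) are pairwise coprime. Let c_i (i ∈ B) be polynomials in F_p[x], let D be a natural number with D ≥ d_0 + Σ_{i∈B} d_i, and let s be a polynomial with deg(s) < d_0. Then the set of polynomials f in F_p[x] with deg(f) < D such that x^{d_0} divides f - s and m_i divides f - c_i for every i ∈ B has cardinality exactly p^θ, where θ = D - Σ_{i∈B} d_i - d_0. -/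
/-!
By the Chinese remainder theorem (`exists_forall_dvd_sub`) the congruences have a common solution
`g`, and by coprimality they hold for `f` exactly when `M = X ^ d0 * ∏ i ∈ B, m i` divides `f - g`.
Since `deg M ≤ D`, writing `f = g % M + M * q` identifies the solutions of degree less than `D`
with the polynomials `q` of degree less than `D - deg M`, of which there are `p ^ (D - deg M)`
(`card_degree_lt_dvd_sub`).
-/

open Polynomial

/-- Chinese remainder theorem for two coprime moduli in a commutative ring. -/
lemma exists_dvd_sub_and_dvd_sub {R : Type*} [CommRing R] {a b : R} (h : IsCoprime a b)
    (x y : R) : ∃ g, a ∣ g - x ∧ b ∣ g - y := by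
  obtain ⟨u, v, huv⟩ := h
  refine ⟨x * (v * b) + y * (u * a), ⟨(y - x) * u, ?_⟩, ⟨(x - y) * v, ?_⟩⟩
  · linear_combination x * huv
  · linear_combination y * huv

/-- Chinese remainder theorem for a finite family of pairwise coprime moduli. -/
lemma exists_forall_dvd_sub {R ι : Type*} [CommRing R] (B : Finset ι) (m c : ι → R)
    (h : (B : Set ι).Pairwise fun i j => IsCoprime (m i) (m j)) :
    ∃ g, ∀ i ∈ B, m i ∣ g - c i := by
  classical
  induction B using Finset.induction_on with
  | empty => exact ⟨0, by simp⟩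
  | insert a B ha ih =>
    obtain ⟨g, hg⟩ := ih (h.mono (by simp))
    have hc : IsCoprime (m a) (∏ i ∈ B, m i) := IsCoprime.prod_right fun i hi =>
      h (by simp) (by simp [hi]) (by rintro rfl; exact ha hi)
    obtain ⟨f, hf, hfg⟩ := exists_dvd_sub_and_dvd_sub hc (c a) g
    refine ⟨f, fun i hi => ?_⟩
    rcases Finset.mem_insert.1 hi with rfl | hi
    · exact hf
    · have := dvd_add ((Finset.dvd_prod_of_mem m hi).trans hfg) (hg i hi)
      rwa [sub_add_sub_cancel] at this

lemma degree_mod_add_mul_lt_iff {K : Type*} [Field K] {M : K[X]} (hM : M ≠ 0) {D : ℕ}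
    (hD : M.natDegree ≤ D) (g q : K[X]) :
    (g % M + M * q).degree < (D : WithBot ℕ) ↔
      q.degree < ((D - M.natDegree : ℕ) : WithBot ℕ) := by
  have hr : (g % M).degree < (D : WithBot ℕ) := by
    refine (EuclideanDomain.mod_lt g hM).trans_le ?_
    rw [degree_eq_natDegree hM]
    exact_mod_cast hD
  have h1 : (g % M + M * q).degree < (D : WithBot ℕ) ↔ (M * q).degree < (D : WithBot ℕ) := by
    simp only [← mem_degreeLT] at hr ⊢
    exact Submodule.add_mem_iff_right _ hr
  rw [h1]
  by_cases hq : q = 0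
  · simp [hq]
  · rw [degree_mul, degree_eq_natDegree hM, degree_eq_natDegree hq]
    norm_cast
    omega

/-- Over a finite field, each residue class modulo a nonzero `M` with `deg M ≤ D` has
`|K| ^ (D - deg M)` members of degree less than `D`. -/
lemma card_degree_lt_dvd_sub {K : Type*} [Field K] {M : K[X]} (hM : M ≠ 0) {D : ℕ}
    (hD : M.natDegree ≤ D) (g : K[X]) :
    Nat.card {f : K[X] // f.degree < (D : WithBot ℕ) ∧ M ∣ f - g} =
      Nat.card K ^ (D - M.natDegree) := by
  have hgM : g % M + M * (g / M) = g := EuclideanDomain.mod_add_div g M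
  have hb : Function.Bijective (fun q : degreeLT K (D - M.natDegree) =>
      (⟨g % M + M * q.1, (degree_mod_add_mul_lt_iff hM hD g q.1).2 (mem_degreeLT.1 q.2),
        ⟨q.1 - g / M, by linear_combination hgM⟩⟩ :
        {f : K[X] // f.degree < (D : WithBot ℕ) ∧ M ∣ f - g})) := by
    constructor
    · intro q q' h
      have h' := congrArg Subtype.val h
      exact Subtype.ext (mul_left_cancel₀ hM (add_left_cancel h'))
    · rintro ⟨f, hf, k, hk⟩
      have e : g % M + M * (k + g / M) = f := by linear_combination hgM - hk
      refine ⟨⟨k + g / M, mem_degreeLT.2 ?_⟩, Subtype.ext e⟩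
      rwa [← degree_mod_add_mul_lt_iff hM hD g, e]
  rw [← Nat.card_congr (Equiv.ofBijective _ hb),
    Nat.card_congr (degreeLTEquiv K (D - M.natDegree)).toEquiv, Nat.card_fun]
  simp

/-- Lemma 3.3 of the paper: the number of polynomials `f` with `deg f < D`
satisfying `f ≡ s (mod x^{d₀})` and `f ≡ c i (mod m i)` for all `i ∈ B`
is exactly `p ^ θ`, where `θ = D - ∑_{i ∈ B} d_i - d₀`. -/
theorem card_candidate_polynomials_given_secret (p : ℕ) (hp : p.Prime)
    {ι : Type*} (B : Finset ι) (d0 : ℕ) (hd0 : 1 ≤ d0)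
    (m c : ι → (ZMod p)[X])
    (hm : ∀ i ∈ B, m i ≠ 0)
    (hcop1 : ∀ i ∈ B, IsCoprime ((X : (ZMod p)[X]) ^ d0) (m i))
    (hcop2 : (B : Set ι).Pairwise fun i j => IsCoprime (m i) (m j))
    (D : ℕ) (hD : d0 + ∑ i ∈ B, (m i).natDegree ≤ D)
    (s : (ZMod p)[X]) (hs : s.degree < (d0 : WithBot ℕ)) :
    Nat.card {f : (ZMod p)[X] //
        f.degree < (D : WithBot ℕ) ∧ (X : (ZMod p)[X]) ^ d0 ∣ f - s ∧
          ∀ i ∈ B, m i ∣ f - c i}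
      = p ^ (D - ∑ i ∈ B, (m i).natDegree - d0) := by
  have : Fact p.Prime := ⟨hp⟩
  have hcop : IsCoprime ((X : (ZMod p)[X]) ^ d0) (∏ i ∈ B, m i) := IsCoprime.prod_right hcop1
  obtain ⟨g₀, hg₀⟩ := exists_forall_dvd_sub B m c hcop2
  obtain ⟨g, hgs, hg⟩ := exists_dvd_sub_and_dvd_sub hcop s g₀
  have hprod : ∏ i ∈ B, m i ≠ 0 := Finset.prod_ne_zero_iff.2 hm
  have hX : (X : (ZMod p)[X]) ^ d0 ≠ 0 := pow_ne_zero _ X_ne_zero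
  have hdeg : (X ^ d0 * ∏ i ∈ B, m i).natDegree = d0 + ∑ i ∈ B, (m i).natDegree := by
    rw [natDegree_mul hX hprod, natDegree_X_pow, natDegree_prod _ _ hm]
  have hgc : ∀ i ∈ B, m i ∣ g - c i := fun i hi => by
    have := dvd_add ((Finset.dvd_prod_of_mem m hi).trans hg) (hg₀ i hi)
    rwa [sub_add_sub_cancel] at this
  have hiff : ∀ f : (ZMod p)[X], (X ^ d0 ∣ f - s ∧ ∀ i ∈ B, m i ∣ f - c i) ↔
      X ^ d0 * ∏ i ∈ B, m i ∣ f - g := by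
    intro f
    constructor
    · rintro ⟨h1, h2⟩
      refine hcop.mul_dvd ?_ (Finset.prod_dvd_of_coprime hcop2 fun i hi => ?_)
      · simpa using dvd_sub h1 hgs
      · simpa using dvd_sub (h2 i hi) (hgc i hi)
    · intro h
      refine ⟨?_, fun i hi => ?_⟩
      · simpa using dvd_add ((dvd_mul_right _ _).trans h) hgs
      · simpa using dvd_add
          (((Finset.dvd_prod_of_mem m hi).trans (dvd_mul_left _ _)).trans h) (hgc i hi)
  rw [Nat.card_congr (Equiv.subtypeEquivRight fun f => and_congr_right fun _ => hiff f),
    card_degree_lt_dvd_sub (mul_ne_zero hX hprod) (hdeg.trans_le hD) g, hdeg, Nat.card_zmod]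
  congr 1
  omega
end

section
/- Let p be a prime and F_p the field with p elements. Let m_i (for i in a finite index set B) be nonzero pairwise coprime polynomials in F_p[x] with d_i = natDegree(m_i), let c_i (i ∈ B) be polynomials in F_p[x], and let D and d_0 be natural numbers with D ≥ d_0 + Σ_{i∈B} d_i. Then the set of polynomials f in F_p[x] with deg(f) < D such that m_i divides f - c_i for every i ∈ B has cardinality exactly p^(θ + d_0), where θ = D - Σ_{i∈B} d_i - d_0. -/
/-!
By the Chinese remainder theorem the system `f ≡ c i (mod m i)` has a solution `g`, and since the
moduli are pairwise coprime, `f` solves the system iff `M = ∏ i ∈ B, m i` divides `f - g`.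
Replacing `g` by its remainder `r` modulo `M` gives `deg r < deg M = N ≤ D`, so `q ↦ M * q + r`
is a bijection from the polynomials of degree `< D - N` onto the solutions of degree `< D`:
the summand `r` does not affect whether `deg (M * q + r) < D`.  The polynomials of
degree `< n` over `ZMod p` are `Fin n → ZMod p`, hence `p ^ n` in number.
-/

open Polynomial

theorem natCard_degreeLT_zmod (p : ℕ) (n : ℕ) : Nat.card (degreeLT (ZMod p) n) = p ^ n := by
  rw [Nat.card_congr (degreeLTEquiv (ZMod p) n).toEquiv, Nat.card_fun]
  simp

/-- Existence half of the Chinese remainder theorem, over a `Finset` of polynomial moduli. -/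
theorem exists_crt_solution {K : Type*} [Field K] {ι : Type*} (B : Finset ι) (m c : ι → K[X])
    (hcop : (B : Set ι).Pairwise fun i j => IsCoprime (m i) (m j)) :
    ∃ g : K[X], ∀ i ∈ B, m i ∣ g - c i := by
  obtain ⟨g, hg⟩ := Ideal.exists_forall_sub_mem_ideal (I := fun i : B => Ideal.span {m i})
    (fun i j hij => (Ideal.isCoprime_span_singleton_iff _ _).2
      (hcop i.2 j.2 (Subtype.coe_injective.ne hij))) (fun i => c i)
  exact ⟨g, fun i hi => Ideal.mem_span_singleton.1 (hg ⟨i, hi⟩)⟩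

/-- The polynomials of degree `< D` in a fixed residue class modulo `M` are parametrised by
quotients of degree `< D - natDegree M`. -/
theorem natCard_residue_class {p : ℕ} [Fact p.Prime] (M g : (ZMod p)[X]) (hM : M ≠ 0) (D : ℕ)
    (hD : M.natDegree ≤ D) :
    Nat.card {f : (ZMod p)[X] // f.degree < (D : WithBot ℕ) ∧ M ∣ f - g}
      = p ^ (D - M.natDegree) := by
  rw [← natCard_degreeLT_zmod p (D - M.natDegree)]
  have hr : (g % M).degree < (D : WithBot ℕ) :=
    (degree_mod_lt g hM).trans_le (degree_le_of_natDegree_le hD)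
  have hgr : M ∣ g % M - g := ⟨-(g / M), by linear_combination EuclideanDomain.div_add_mod g M⟩
  have hmul (q : (ZMod p)[X]) :
      (M * q).degree < (D : WithBot ℕ) ↔ q.degree < ((D - M.natDegree : ℕ) : WithBot ℕ) := by
    rcases eq_or_ne q 0 with rfl | hq
    · simp
    · rw [← natDegree_lt_iff_degree_lt (mul_ne_zero hM hq), ← natDegree_lt_iff_degree_lt hq,
        natDegree_mul hM hq]
      omega
  symm
  refine Nat.card_eq_of_bijective
    (fun q : degreeLT (ZMod p) (D - M.natDegree) => ⟨M * q.1 + g % M, ?_, ?_⟩) ⟨?_, ?_⟩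
  · exact (degree_add_le _ _).trans_lt (max_lt ((hmul _).2 (mem_degreeLT.1 q.2)) hr)
  · rw [add_sub_assoc]
    exact dvd_add (dvd_mul_right _ _) hgr
  · intro q q' h
    exact Subtype.ext (mul_left_cancel₀ hM (add_right_cancel (Subtype.ext_iff.1 h)))
  · rintro ⟨f, hf, hfg⟩
    obtain ⟨q, hq⟩ : M ∣ f - g % M := by
      rw [← sub_sub_sub_cancel_right _ _ g]
      exact dvd_sub hfg hgr
    refine ⟨⟨q, mem_degreeLT.2 ((hmul q).1 ?_)⟩, Subtype.ext ?_⟩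
    · rw [← hq]
      exact (degree_sub_le _ _).trans_lt (max_lt hf hr)
    · simp only [← hq, sub_add_cancel]

/-- Lemma 3.4 of the paper: the number of polynomials `f` with `deg f < D`
satisfying `f ≡ c i (mod m i)` for all `i ∈ B` is exactly `p ^ (θ + d₀)`,
where `θ = D - ∑_{i ∈ B} d_i - d₀`. -/
theorem card_consistent_polynomials (p : ℕ) (hp : p.Prime)
    {ι : Type*} (B : Finset ι)
    (m c : ι → (ZMod p)[X])
    (hm : ∀ i ∈ B, m i ≠ 0)
    (hcop : (B : Set ι).Pairwise fun i j => IsCoprime (m i) (m j))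
    (D d0 : ℕ) (hD : d0 + ∑ i ∈ B, (m i).natDegree ≤ D) :
    Nat.card {f : (ZMod p)[X] //
        f.degree < (D : WithBot ℕ) ∧ ∀ i ∈ B, m i ∣ f - c i}
      = p ^ ((D - ∑ i ∈ B, (m i).natDegree - d0) + d0) := by
  have : Fact p.Prime := ⟨hp⟩
  obtain ⟨g, hg⟩ := exists_crt_solution B m c hcop
  have hdeg : (∏ i ∈ B, m i).natDegree = ∑ i ∈ B, (m i).natDegree := natDegree_prod B m hm
  have hiff (f : (ZMod p)[X]) : (∀ i ∈ B, m i ∣ f - c i) ↔ ∏ i ∈ B, m i ∣ f - g := by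
    have hstep : ∀ i ∈ B, (m i ∣ f - c i ↔ m i ∣ f - g) := fun i hi => by
      rw [← sub_add_sub_cancel f g (c i)]
      exact dvd_add_left (hg i hi)
    rw [forall₂_congr hstep]
    exact ⟨Finset.prod_dvd_of_coprime hcop, fun h i hi => (Finset.dvd_prod_of_mem m hi).trans h⟩
  simp_rw [hiff]
  rw [natCard_residue_class _ g (Finset.prod_ne_zero_iff.2 hm) D (by omega), hdeg]
  congr 1
  omega
end

section
/- Let p be a prime and F_p the field with p elements. Let d_0 ≥ 1 and let m_i (for i in a finite index set B) be nonzero polynomials in F_p[x] with d_i = natDegree(m_i), such that x^{d_0} and the m_i (i ∈ B) are pairwise coprime. Let c_i (i ∈ B) be polynomials, let D ≥ d_0 + Σ_{i∈B} d_i, and let F be the (nonempty) finite set of polynomials f with deg(f) < D satisfying m_i ∣ f - c_i for all i ∈ B. Let g be any fixed polynomial in F_p[x]. Then the pushforward under the map f ↦ (f + g) mod x^{d_0} of the uniform probability distribution on F equals the uniform probability distribution on the set of polynomials of degree strictly less than d_0. -/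
open Polynomial

/-!
All nonempty fibres of `f ↦ (f + g) mod x^{d₀}` on the solution set of the congruences have the
same size, and every residue is attained. Indeed, let `M = ∏ mᵢ`. As `x^{d₀}` is coprime to `M`,
every residue `r` is the class modulo `x^{d₀}` of a multiple `w` of `M` of degree less than
`d₀ + deg M ≤ D` (`exists_multiple_with_residue`). Adding `w` preserves the solution set and
shifts the residue by `r`, so translation by the `w` belonging to `t - s` injects the fibre over
`s` into the fibre over `t`. A map onto a finite set with equal fibres pushes the uniform
distribution to the uniform distribution (`map_uniformOfFinset_of_fiber_le`).
-/

open Classical in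
/-- A map `φ : F → S` between finite sets whose fibres over `S` all have the same cardinality
pushes the uniform distribution forward to the uniform one. The inequality `hfib` is required for
every ordered pair, so it is an equality. -/
lemma map_uniformOfFinset_of_fiber_le {α β : Type*} (F : Finset α) (hF : F.Nonempty)
    (S : Finset β) (hS : S.Nonempty) (φ : α → β) (hφ : ∀ a ∈ F, φ a ∈ S)
    (hfib : ∀ s ∈ S, ∀ t ∈ S, (F.filter (φ · = s)).card ≤ (F.filter (φ · = t)).card) :
    (PMF.uniformOfFinset F hF).map φ = PMF.uniformOfFinset S hS := by
  ext s
  have hval : (PMF.uniformOfFinset F hF).map φ s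
      = ((F.filter (φ · = s)).card : ENNReal) * (F.card : ENNReal)⁻¹ := by
    rw [PMF.map_apply, tsum_eq_sum (s := F.filter (φ · = s)), ← nsmul_eq_mul]
    · refine Finset.sum_eq_card_nsmul fun a ha => ?_
      rw [Finset.mem_filter] at ha
      rw [if_pos ha.2.symm, PMF.uniformOfFinset_apply_of_mem _ ha.1]
    · intro a ha
      split_ifs with h
      · refine PMF.uniformOfFinset_apply_of_notMem _ fun haF => ha ?_
        exact Finset.mem_filter.2 ⟨haF, h.symm⟩
      · rfl
  rw [hval]
  by_cases hs : s ∈ S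
  · rw [PMF.uniformOfFinset_apply_of_mem _ hs]
    have hcard : F.card = S.card * (F.filter (φ · = s)).card := by
      rw [Finset.card_eq_sum_card_fiberwise hφ]
      exact Finset.sum_const_nat fun t ht => le_antisymm (hfib t ht s hs) (hfib s hs t ht)
    have hN : (F.filter (φ · = s)).card ≠ 0 := by
      intro h0
      rw [h0, mul_zero] at hcard
      exact hF.card_ne_zero hcard
    rw [hcard, Nat.cast_mul, ENNReal.mul_inv (Or.inr (by simp)) (Or.inl (by simp)),
      mul_left_comm, ENNReal.mul_inv_cancel (by exact_mod_cast hN) (by simp), mul_one]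
  · rw [PMF.uniformOfFinset_apply_of_notMem _ hs, Finset.filter_eq_empty_iff.2]
    · simp
    · rintro a ha rfl
      exact hs (hφ a ha)

/-- If `M ≠ 0` is coprime to the monic polynomial `q`, every residue class modulo `q` contains a
multiple of `M` of degree less than `deg q + deg M`. -/
lemma exists_multiple_with_residue {K : Type*} [Field K] {q M : K[X]} (hq : q.Monic)
    (hM : M ≠ 0) (hcop : IsCoprime q M) (r : K[X]) :
    ∃ w : K[X], M ∣ w ∧ w.degree < ((q.natDegree + M.natDegree : ℕ) : WithBot ℕ) ∧
      w %ₘ q = r %ₘ q := by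
  obtain ⟨v, u, huv⟩ := hcop
  refine ⟨M * ((u * r) %ₘ q), dvd_mul_right _ _, ?_, ?_⟩
  · rw [degree_mul, add_comm q.natDegree, Nat.cast_add, degree_eq_natDegree hM,
      ← degree_eq_natDegree hq.ne_zero]
    exact WithBot.add_lt_add_left (by simp) (degree_modByMonic_lt _ hq)
  · rw [← sub_eq_zero, ← sub_modByMonic, modByMonic_eq_zero_iff_dvd hq, modByMonic_eq_sub_mul_div]
    exact ⟨-(M * (u * r /ₘ q)) - v * r, by linear_combination r * huv⟩

/-- Probabilistic core of Theorem 3.5 (asymptotic perfectness): the pushforward,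
under `f ↦ (f + g) mod x^{d₀}`, of the uniform distribution on the set `FF` of
polynomials of degree `< D` consistent with the adversary's congruences equals
the uniform distribution on the polynomials of degree `< d₀`. -/
theorem uniform_secret_given_adversary_view (p : ℕ) (hp : p.Prime)
    {ι : Type*} (B : Finset ι) (d0 : ℕ) (hd0 : 1 ≤ d0)
    (m c : ι → (ZMod p)[X])
    (hm : ∀ i ∈ B, m i ≠ 0)
    (hcop1 : ∀ i ∈ B, IsCoprime ((X : (ZMod p)[X]) ^ d0) (m i))
    (hcop2 : (B : Set ι).Pairwise fun i j => IsCoprime (m i) (m j))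
    (D : ℕ) (hD : d0 + ∑ i ∈ B, (m i).natDegree ≤ D)
    (FF : Finset (ZMod p)[X])
    (hFF : ∀ f : (ZMod p)[X],
      f ∈ FF ↔ (f.degree < (D : WithBot ℕ) ∧ ∀ i ∈ B, m i ∣ f - c i))
    (hFFne : FF.Nonempty)
    (SS : Finset (ZMod p)[X])
    (hSS : ∀ f : (ZMod p)[X], f ∈ SS ↔ f.degree < (d0 : WithBot ℕ))
    (hSSne : SS.Nonempty)
    (g : (ZMod p)[X]) :
    (PMF.uniformOfFinset FF hFFne).map (fun f => (f + g) %ₘ (X ^ d0))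
      = PMF.uniformOfFinset SS hSSne := by
  classical
  have : Fact p.Prime := ⟨hp⟩
  have hq : ((X : (ZMod p)[X]) ^ d0).Monic := monic_X_pow d0
  have hM : ∏ i ∈ B, m i ≠ 0 := Finset.prod_ne_zero_iff.2 hm
  have hcop : IsCoprime ((X : (ZMod p)[X]) ^ d0) (∏ i ∈ B, m i) := IsCoprime.prod_right hcop1
  refine map_uniformOfFinset_of_fiber_le _ _ _ _ _ (fun f _ => ?_) fun s hs t ht => ?_
  · rw [hSS]
    simpa using degree_modByMonic_lt (f + g) hq
  obtain ⟨w, hMw, hwdeg, hw⟩ := exists_multiple_with_residue hq hM hcop (t - s)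
  rw [natDegree_X_pow, natDegree_prod _ _ hm] at hwdeg
  have hwD : w.degree < (D : WithBot ℕ) := hwdeg.trans_le (by exact_mod_cast hD)
  have hts : (t - s) %ₘ (X ^ d0) = t - s := by
    rw [modByMonic_eq_self_iff hq, degree_X_pow]
    exact (degree_sub_le t s).trans_lt (max_lt ((hSS t).1 ht) ((hSS s).1 hs))
  refine Finset.card_le_card_of_injOn (· + w) (fun f hf => ?_) (add_left_injective w).injOn
  simp only [Finset.coe_filter, Set.mem_ofPred_eq, hFF] at hf ⊢
  obtain ⟨⟨hfD, hfm⟩, hfs⟩ := hf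
  refine ⟨⟨(degree_add_le f w).trans_lt (max_lt hfD hwD), fun i hi => ?_⟩, ?_⟩
  · rw [add_sub_right_comm]
    exact dvd_add (hfm i hi) ((Finset.dvd_prod_of_mem m hi).trans hMw)
  · rw [add_right_comm, add_modByMonic, hfs, hw, hts, add_sub_cancel]
end

section
/- Let p be a prime and F_p the field with p elements. Let m_1, ..., m_n be nonzero pairwise coprime polynomials in F_p[x] whose degrees d_i = natDegree(m_i) satisfy d_1 ≤ d_2 ≤ ... ≤ d_n. Let A be a subset of {1, ..., n}, let t be a natural number with t ≤ |A|, and let f and g be polynomials in F_p[x] with deg(f) < Σ_{i=1}^{t} d_i and deg(g) < Σ_{i=1}^{t} d_i. If m_i divides f - g for every i ∈ A, then f = g. -/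
/-!
Since the moduli are pairwise coprime, `∏ i ∈ A, m i` divides `f - g`, and its degree is the sum
of the degrees `d i` over `A`. The degrees increase with the index and `A` has at least `t`
elements, so this sum is at least the sum of the first `t` degrees
(`sum_first_le_sum`), which exceeds `deg (f - g)`. Hence `f - g = 0`.
-/

open Polynomial

/-- For a monotone sequence of naturals, the first `t` terms have the least sum among the sums over
sets of at least `t` indices: the `k`-th smallest index in such a set is at least `k`. -/
theorem sum_first_le_sum {n : ℕ} (d : Fin n → ℕ) (hd : Monotone d) (A : Finset (Fin n)) (t : ℕ)
    (ht : t ≤ A.card) :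
    ∑ i ∈ Finset.univ.filter (fun i : Fin n => (i : ℕ) < t), d i ≤ ∑ i ∈ A, d i := by
  have htn : t ≤ n := by simpa using ht.trans (Finset.card_le_univ A)
  let e := A.orderEmbOfCardLe ht
  have he : ∀ (k : ℕ) (hk : k < t), k ≤ (e ⟨k, hk⟩ : ℕ) := by
    intro k
    induction k with
    | zero => intro _; exact Nat.zero_le _
    | succ k ih =>
      intro hk
      have hlt : e ⟨k, by omega⟩ < e ⟨k + 1, hk⟩ := e.strictMono (by simp)
      have := ih (by omega)
      have := Fin.lt_def.1 hlt
      omega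
  have hS : Finset.univ.filter (fun i : Fin n => (i : ℕ) < t) =
      Finset.univ.map (Fin.castLEEmb htn) := by
    ext i
    simp only [Finset.mem_filter, Finset.mem_univ, true_and, Finset.mem_map]
    constructor
    · intro hi
      exact ⟨⟨i, hi⟩, rfl⟩
    · rintro ⟨k, rfl⟩
      exact k.2
  calc _ = ∑ k : Fin t, d (Fin.castLE htn k) := by rw [hS, Finset.sum_map]; rfl
    _ ≤ ∑ k : Fin t, d (e k) := Finset.sum_le_sum fun k _ => hd (Fin.le_def.2 (he k k.2))
    _ = ∑ i ∈ Finset.univ.map e.toEmbedding, d i := by rw [Finset.sum_map]; rfl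
    _ ≤ ∑ i ∈ A, d i := by
      refine Finset.sum_le_sum_of_subset fun i hi => ?_
      obtain ⟨k, -, rfl⟩ := Finset.mem_map.1 hi
      exact Finset.orderEmbOfCardLe_mem A ht k

/-- Core of the correctness theorem (Theorem 3.1): a polynomial of degree
below the sum of the `t` smallest modulus degrees is uniquely determined by
its residues modulo the moduli of any set `A` of at least `t` participants. -/
theorem reconstruction_unique (p : ℕ) (hp : p.Prime) (n : ℕ)
    (m : Fin n → (ZMod p)[X])
    (hm : ∀ i, m i ≠ 0)
    (hcop : Pairwise fun i j => IsCoprime (m i) (m j))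
    (hmono : Monotone fun i => (m i).natDegree)
    (A : Finset (Fin n)) (t : ℕ) (ht : t ≤ A.card)
    (f g : (ZMod p)[X])
    (hf : f.degree <
      ((∑ i ∈ Finset.univ.filter (fun i : Fin n => (i : ℕ) < t),
        (m i).natDegree : ℕ) : WithBot ℕ))
    (hg : g.degree <
      ((∑ i ∈ Finset.univ.filter (fun i : Fin n => (i : ℕ) < t),
        (m i).natDegree : ℕ) : WithBot ℕ))
    (hdvd : ∀ i ∈ A, m i ∣ f - g) :
    f = g := by
  have : Fact p.Prime := ⟨hp⟩
  have hprod : ∏ i ∈ A, m i ∣ f - g :=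
    Finset.prod_dvd_of_coprime (fun i _ j _ hij => hcop hij) hdvd
  have hdeg : (∏ i ∈ A, m i).degree = ((∑ i ∈ A, (m i).natDegree : ℕ) : WithBot ℕ) := by
    rw [degree_eq_natDegree (Finset.prod_ne_zero_iff.2 fun i _ => hm i),
      natDegree_prod _ _ fun i _ => hm i]
  have hle := sum_first_le_sum _ hmono A t ht
  refine sub_eq_zero.1 (eq_zero_of_dvd_of_degree_lt hprod ?_)
  rw [hdeg]
  exact ((degree_sub_le f g).trans_lt (max_lt hf hg)).trans_le (by exact_mod_cast hle)
end
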